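/- Let n be a positive integer and f : {-1,1}^n → [-1,1] be such that f̂({i}) ≥ 0 for every 1 ≤ i ≤ n. Then for every nonzero ε with |ε| ≤ 1/√n, the level-1 ℓ₁ norm of f satisfies L₁¹(f) = ∑_{i=1}^n |f̂({i})| ≤ |(1/ε)·(E_ε[f] − E_0[f])| + |ε| · n. -/

import Mathlib

open Finset

/-- The real sign `±1` associated to a Boolean, encoding `{-1,1}`. -/
noncomputable def sgn (b : Bool) : ℝ := if b then 1 else -1

/-- Fourier coefficient `f̂(S) = 2^{-n} ∑_x f(x) ∏_{i∈S} x_i` of `f : {-1,1}^n → ℝ`. -/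
noncomputable def walshCoeff {n : ℕ} (f : (Fin n → Bool) → ℝ) (S : Finset (Fin n)) : ℝ :=
  (2 ^ n : ℝ)⁻¹ * ∑ x : Fin n → Bool, f x * ∏ i ∈ S, sgn (x i)

/-- Expectation of `f` under `ε`-biased coins:
`E_ε[f] = ∑_x f(x) ∏_i (1 + ε·x_i)/2`. -/
noncomputable def biasedExp {n : ℕ} (f : (Fin n → Bool) → ℝ) (ε : ℝ) : ℝ :=
  ∑ x : Fin n → Bool, f x * ∏ i : Fin n, (1 + ε * sgn (x i)) / 2

/-!
Expanding the product in `E_ε[f]` gives `E_ε[f] = ∑_S ε^|S| f̂(S)`. The levels `0` and `1` of this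
sum are `E_0[f]` and `ε ∑_i f̂({i})`. By Cauchy–Schwarz and Parseval the remaining levels contribute
at most `‖f‖₂ (∑_{|S| ≥ 2} ε^{2|S|})^{1/2} = ‖f‖₂ ((1 + ε²)^n - 1 - n ε²)^{1/2}`, where
`‖f‖₂² = E_0[f²]`, and this is at most `‖f‖₂ n ε²` as long as `n ε² ≤ 1`. Dividing by `ε` gives the
claim.
-/

section FinsetSums

variable {α : Type*} [Fintype α]

lemma sum_finset_eq_empty_add_singleton_add {M : Type*} [AddCommMonoid M] (g : Finset α → M) :
    ∑ S, g S = g ∅ + ∑ i, g {i} + ∑ S with 2 ≤ #S, g S := by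
  classical
  have level_le_one : ({S | ¬ 2 ≤ #S} : Finset (Finset α)) =
      insert ∅ (univ.map ⟨singleton, singleton_injective⟩) := by
    ext S
    simp [Nat.le_one_iff_eq_zero_or_eq_one, card_eq_one, eq_comm]
  rw [← sum_filter_not_add_sum_filter _ (fun S ↦ 2 ≤ #S), level_le_one, sum_insert (by simp),
    sum_map, Function.Embedding.coeFn_mk]

lemma sum_two_le_card_pow_card {R : Type*} [CommRing R] (t : R) :
    ∑ S : Finset α with 2 ≤ #S, t ^ #S = (1 + t) ^ Fintype.card α - 1 - Fintype.card α * t := by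
  have binomial : ∑ S : Finset α, t ^ #S = (1 + t) ^ Fintype.card α := by
    simpa [add_comm] using Fintype.sum_pow_mul_eq_add_pow α t 1
  rw [← binomial, sum_finset_eq_empty_add_singleton_add]
  simp only [card_empty, pow_zero, card_singleton, pow_one, sum_const, card_univ, nsmul_eq_mul]
  ring

end FinsetSums

lemma one_add_pow_sub_one_sub_le {n : ℕ} {t : ℝ} (ht : 0 ≤ t) (hnt : n * t ≤ 1) :
    (1 + t) ^ n - 1 - n * t ≤ (n * t) ^ 2 := by
  have pow_le_exp : (1 + t) ^ n ≤ Real.exp (n * t) := by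
    rw [Real.exp_nat_mul, add_comm]
    gcongr
    exact Real.add_one_le_exp t
  have exp_le : Real.exp (n * t) - 1 - n * t ≤ (n * t) ^ 2 :=
    (le_abs_self _).trans
      (Real.abs_exp_sub_one_sub_id_le (by rwa [abs_of_nonneg (by positivity)]))
  linarith

lemma mul_sq_le_one_of_abs_le_one_div_sqrt {a ε : ℝ} (ha : 0 ≤ a) (hε : |ε| ≤ 1 / √a) :
    a * ε ^ 2 ≤ 1 :=
  calc a * ε ^ 2 = a * |ε| ^ 2 := by rw [sq_abs]
    _ ≤ a * (1 / √a) ^ 2 := by gcongr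
    _ = a / a := by rw [div_pow, one_pow, Real.sq_sqrt ha, mul_one_div]
    _ ≤ 1 := div_self_le_one a

lemma sgn_mul_sgn (a b : Bool) : sgn a * sgn b = if a = b then 1 else -1 := by
  cases a <;> cases b <;> simp [sgn]

section Fourier

variable {n : ℕ} (f : (Fin n → Bool) → ℝ)

lemma sum_prod_sgn_mul_prod_sgn (x y : Fin n → Bool) :
    ∑ S : Finset (Fin n), (∏ i ∈ S, sgn (x i)) * ∏ i ∈ S, sgn (y i) =
      if x = y then 2 ^ n else 0 := by
  simp only [← prod_mul_distrib, sgn_mul_sgn]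
  -- The sum over `S` factors as `∏ i, (1 + x_i y_i)`.
  rw [← powerset_univ, ← prod_one_add]
  split_ifs with hxy
  · subst hxy
    simp [one_add_one_eq_two]
  · obtain ⟨i, hi⟩ := Function.ne_iff.mp hxy
    exact prod_eq_zero (mem_univ i) (by simp [hi])

lemma biasedExp_zero : biasedExp f 0 = (2 ^ n : ℝ)⁻¹ * ∑ x, f x := by
  simp [biasedExp, ← sum_mul, mul_comm]

lemma biasedExp_zero_eq_walshCoeff_empty : biasedExp f 0 = walshCoeff f ∅ := by
  simp [biasedExp_zero, walshCoeff]

lemma biasedExp_zero_le {f : (Fin n → Bool) → ℝ} {c : ℝ} (hf : ∀ x, f x ≤ c) :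
    biasedExp f 0 ≤ c := by
  rw [biasedExp_zero, inv_mul_le_iff₀ (by positivity)]
  simpa using sum_le_card_nsmul univ f c fun x _ ↦ hf x

lemma sqrt_biasedExp_sq_zero_le {f : (Fin n → Bool) → ℝ} {c : ℝ} (hf : ∀ x, |f x| ≤ c) :
    √(biasedExp (f ^ 2) 0) ≤ c :=
  Real.sqrt_le_iff.mpr ⟨(abs_nonneg _).trans (hf default),
    biasedExp_zero_le fun x ↦ sq_le_sq.mpr ((hf x).trans (le_abs_self c))⟩

lemma biasedExp_eq_sum_pow_card_mul_walshCoeff (ε : ℝ) :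
    biasedExp f ε = ∑ S, ε ^ #S * walshCoeff f S := by
  have expand (x : Fin n → Bool) : ∏ i, (1 + ε * sgn (x i)) / 2 =
      (2 ^ n : ℝ)⁻¹ * ∑ S, ε ^ #S * ∏ i ∈ S, sgn (x i) := by
    simp [prod_one_add, prod_mul_distrib, div_eq_inv_mul]
  simp only [biasedExp, walshCoeff, expand, mul_sum]
  rw [sum_comm]
  exact sum_congr rfl fun S _ ↦ sum_congr rfl fun x _ ↦ by ring

theorem sum_sq_walshCoeff : ∑ S, walshCoeff f S ^ 2 = biasedExp (f ^ 2) 0 := by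
  calc ∑ S, walshCoeff f S ^ 2
      = ∑ S, ∑ x, ∑ y, ((2 ^ n : ℝ)⁻¹) ^ 2 * (f x * f y) *
          ((∏ i ∈ S, sgn (x i)) * ∏ i ∈ S, sgn (y i)) := by
        refine sum_congr rfl fun S _ ↦ ?_
        rw [walshCoeff, mul_pow, sq (∑ x, _), sum_mul_sum]
        simp only [mul_sum]
        exact sum_congr rfl fun x _ ↦ sum_congr rfl fun y _ ↦ by ring
    _ = ∑ x, ∑ y, ((2 ^ n : ℝ)⁻¹) ^ 2 * (f x * f y) *
          ∑ S, (∏ i ∈ S, sgn (x i)) * ∏ i ∈ S, sgn (y i) := by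
        rw [sum_comm]
        simp only [mul_sum]
        exact sum_congr rfl fun x _ ↦ sum_comm
    _ = (2 ^ n : ℝ)⁻¹ * ∑ x, f x ^ 2 := by
        simp only [sum_prod_sgn_mul_prod_sgn, mul_ite, mul_zero, sum_ite_eq, mem_univ, if_true,
          mul_sum]
        exact sum_congr rfl fun x _ ↦ by field_simp
    _ = biasedExp (f ^ 2) 0 := (biasedExp_zero (f ^ 2)).symm

end Fourier

section CoinProblem

variable {n : ℕ} (f : (Fin n → Bool) → ℝ)

lemma biasedExp_sub_sub_eq_sum_two_le_card (ε : ℝ) :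
    biasedExp f ε - biasedExp f 0 - ε * ∑ i, walshCoeff f {i} =
      ∑ S with 2 ≤ #S, ε ^ #S * walshCoeff f S := by
  rw [biasedExp_eq_sum_pow_card_mul_walshCoeff f ε, sum_finset_eq_empty_add_singleton_add,
    biasedExp_zero_eq_walshCoeff_empty]
  simp only [card_empty, pow_zero, one_mul, card_singleton, pow_one, ← mul_sum]
  ring

lemma abs_biasedExp_sub_sub_le {ε : ℝ} (hε : n * ε ^ 2 ≤ 1) :
    |biasedExp f ε - biasedExp f 0 - ε * ∑ i, walshCoeff f {i}| ≤
      n * ε ^ 2 * √(biasedExp (f ^ 2) 0) := by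
  have weights_le : ∑ S : Finset (Fin n) with 2 ≤ #S, (ε ^ #S) ^ 2 ≤ (n * ε ^ 2) ^ 2 := by
    simp only [pow_right_comm ε _ 2, sum_two_le_card_pow_card, Fintype.card_fin]
    exact one_add_pow_sub_one_sub_le (sq_nonneg ε) hε
  have coeffs_le : ∑ S with 2 ≤ #S, walshCoeff f S ^ 2 ≤ biasedExp (f ^ 2) 0 := by
    rw [← sum_sq_walshCoeff]
    exact sum_le_univ_sum_of_nonneg fun S ↦ sq_nonneg _
  calc |biasedExp f ε - biasedExp f 0 - ε * ∑ i, walshCoeff f {i}|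
      = |∑ S with 2 ≤ #S, ε ^ #S * walshCoeff f S| := by
        rw [biasedExp_sub_sub_eq_sum_two_le_card]
    _ ≤ √((∑ S with 2 ≤ #S, (ε ^ #S) ^ 2) * ∑ S with 2 ≤ #S, walshCoeff f S ^ 2) :=
        Real.abs_le_sqrt (sum_mul_sq_le_sq_mul_sq _ _ _)
    _ ≤ √((n * ε ^ 2) ^ 2 * biasedExp (f ^ 2) 0) := by gcongr
    _ = n * ε ^ 2 * √(biasedExp (f ^ 2) 0) := by
        rw [Real.sqrt_mul (sq_nonneg _), Real.sqrt_sq (by positivity)]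

theorem level_one_le_coin_advantage_general {f : (Fin n → Bool) → ℝ}
    (hpos : ∀ i, 0 ≤ walshCoeff f {i}) {ε : ℝ} (hε0 : ε ≠ 0) (hε : n * ε ^ 2 ≤ 1) :
    ∑ i, |walshCoeff f {i}| ≤
      |(1 / ε) * (biasedExp f ε - biasedExp f 0)| + |ε| * n * √(biasedExp (f ^ 2) 0) := by
  set D := biasedExp f ε - biasedExp f 0
  set W := ∑ i, walshCoeff f {i}
  have remainder_le : |(1 / ε) * (D - ε * W)| ≤ |ε| * n * √(biasedExp (f ^ 2) 0) := by
    rw [abs_mul, abs_one_div, one_div_mul_eq_div, div_le_iff₀ (abs_pos.mpr hε0)]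
    calc |D - ε * W| ≤ n * ε ^ 2 * √(biasedExp (f ^ 2) 0) := abs_biasedExp_sub_sub_le f hε
      _ = |ε| * n * √(biasedExp (f ^ 2) 0) * |ε| := by rw [← sq_abs ε]; ring
  calc ∑ i, |walshCoeff f {i}| = W := sum_congr rfl fun i _ ↦ abs_of_nonneg (hpos i)
    _ = (1 / ε) * D - (1 / ε) * (D - ε * W) := by field_simp; ring
    _ ≤ |(1 / ε) * D| + |(1 / ε) * (D - ε * W)| := (le_abs_self _).trans (abs_sub _ _)
    _ ≤ |(1 / ε) * D| + |ε| * n * √(biasedExp (f ^ 2) 0) := by gcongr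

end CoinProblem

/-- if f : {-1,1}^n → [-1,1] has f̂({i}) ≥ 0 for all i, then for
every nonzero |ε| ≤ 1/√n,
∑_i |f̂({i})| ≤ |(1/ε)(E_ε[f] − E_0[f])| + |ε|·n. -/
theorem level_one_le_coin_advantage (n : ℕ) (hn : 0 < n) (f : (Fin n → Bool) → ℝ)
    (hf : ∀ x, f x ∈ Set.Icc (-1 : ℝ) 1)
    (hpos : ∀ i : Fin n, 0 ≤ walshCoeff f {i})
    (ε : ℝ) (hε0 : ε ≠ 0) (hε : |ε| ≤ 1 / Real.sqrt n) :
    ∑ i : Fin n, |walshCoeff f {i}| ≤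
      |(1 / ε) * (biasedExp f ε - biasedExp f 0)| + |ε| * n := by
  have hnε : n * ε ^ 2 ≤ 1 := mul_sq_le_one_of_abs_le_one_div_sqrt n.cast_nonneg hε
  grw [level_one_le_coin_advantage_general hpos hε0 hnε,
    sqrt_biasedExp_sq_zero_le fun x ↦ abs_le.mpr (hf x), mul_one]
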